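/- Let n ≥ 2, let q : ℝ^n_+ → ℝ satisfy the cost-function conditions, and let c ∈ ℝ^n_+. Then the profit operator Π_q is injective on L^∞_{I−c}(ℝ^n_+) (i.e., if f ∈ L^∞_{I−c}(ℝ^n_+) and (Π_q f)(p_0,p) = 0 for all p_0 > 0 and all p ∈ ℝ^n_+, then f = 0 a.e.) if and only if (M e^{−q})(c + iξ) ≠ 0 for every ξ ∈ ℝ^n. -/

import Mathlib

open MeasureTheory Complex Set

noncomputable section

/-- The positive orthant `ℝ^n_+`. -/
def posOrth (n : ℕ) : Set (Fin n → ℝ) := {x | ∀ i, 0 < x i}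

/-- `q` satisfies the cost-function conditions: `C¹` on `ℝ^n_+`, positive,
positively homogeneous of degree one, with bounded level sets. -/
def IsCostFun (n : ℕ) (q : (Fin n → ℝ) → ℝ) : Prop :=
  ContDiffOn ℝ 1 q (posOrth n) ∧
  (∀ x ∈ posOrth n, 0 < q x) ∧
  (∀ lam : ℝ, 0 < lam → ∀ x ∈ posOrth n, q (fun i => lam * x i) = lam * q x) ∧
  (∀ t : ℝ, Bornology.IsBounded {x | x ∈ posOrth n ∧ q x = t})

/-- The `n`-dimensional Mellin transform `(Mg)(z) = ∫_{ℝ^n_+} x^{z-I} g(x) dx`. -/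
def mellinT (n : ℕ) (g : (Fin n → ℝ) → ℝ) (z : Fin n → ℂ) : ℂ :=
  ∫ x in posOrth n, (∏ i, (x i : ℂ) ^ (z i - 1)) * g x

/-- Membership in `L^∞_c(ℝ^n_+)`: measurable with `ess sup |f(x) x^c| < ∞`. -/
def MemLinfw (n : ℕ) (c : Fin n → ℝ) (f : (Fin n → ℝ) → ℝ) : Prop :=
  AEStronglyMeasurable f (volume.restrict (posOrth n)) ∧
  ∃ K : ℝ, ∀ᵐ x ∂(volume.restrict (posOrth n)), |f x * ∏ i, x i ^ c i| ≤ K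

/-- The profit operator `(Π_q f)(p₀, p)`. -/
def Piq (n : ℕ) (q : (Fin n → ℝ) → ℝ) (f : (Fin n → ℝ) → ℝ)
    (p0 : ℝ) (p : Fin n → ℝ) : ℝ :=
  ∫ x in posOrth n, max 0 (p0 - q (fun i => p i * x i)) * f x

/-!
In logarithmic coordinates `x = e^u`, `p = e^{-w}`, the function `(Π_q f)(1, p)` is, up to a
nonvanishing factor, the correlation `∫ K(u - w) g(u) du` of the bounded function
`g(u) = x^{I-c} f(x)` with the kernel `K(u) = x^c max {0, 1 - q(x)}`. The Fourier transform of `K`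
is the Mellin transform of `max {0, 1 - q}` along `c + iℝⁿ`. Since
`e^{-s} = ∫₀^∞ max {0, t - s} e^{-t} dt`, homogeneity of `q` shows that this Mellin transform at `z`
is `(M e^{-q})(z)` divided by `Γ(2 + z₁ + ⋯ + zₙ)`.

A zero of the transform gives a character annihilated by the correlation. Conversely, bounded level
sets make `K` decay exponentially, so `𝓕 K` is smooth, and if it has no zeros then every compactly
supported smooth function is a smooth multiple of it. Hence `g` is orthogonal to the Fourier
transform of every such function; as these test functions are stable under translation, `g = 0`.
-/

section Wiener

open Filter
open scoped Real FourierTransform SchwartzMap ContDiff RealInnerProductSpace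

variable {V F : Type*} [NormedAddCommGroup V] [InnerProductSpace ℝ V] [FiniteDimensional ℝ V]
  [MeasurableSpace V] [BorelSpace V] [NormedAddCommGroup F] [NormedSpace ℂ F]

theorem memLp_top_comp_quasiMeasurePreserving {α β E : Type*} {_ : MeasurableSpace α}
    {_ : MeasurableSpace β} [NormedAddCommGroup E] {μ : Measure α} {ν : Measure β} {g : β → E}
    {f : α → β} (hg : MemLp g ⊤ ν) (hf : Measure.QuasiMeasurePreserving f μ ν) :
    MemLp (g ∘ f) ⊤ μ := by
  refine ⟨hg.1.comp_quasiMeasurePreserving hf, lt_of_le_of_lt ?_ hg.2⟩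
  rw [eLpNorm_exponent_top, eLpNorm_exponent_top]
  exact eLpNormEssSup_le_of_ae_enorm_bound (hf.ae (enorm_ae_le_eLpNormEssSup g ν))

theorem ae_eq_zero_of_fourier_eq_zero [CompleteSpace F] {f : V → F} (hf : Integrable f)
    (h : 𝓕 f = 0) : ∀ᵐ x, f x = 0 := by
  refine ae_eq_zero_of_integral_contDiff_smul_eq_zero hf.locallyIntegrable fun φ hφ hφc ↦ ?_
  let ψ : 𝓢(V, ℂ) := 𝓕⁻ ((hφc.comp_left ofReal_zero).toSchwartzMap
    (ofRealCLM.contDiff.comp hφ))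
  have hψ (x : V) : 𝓕 (ψ : V → ℂ) x = φ x := by
    rw [← SchwartzMap.fourier_coe, FourierTransform.fourier_fourierInv_eq]
    rfl
  have parseval : ∫ x, 𝓕 (ψ : V → ℂ) x • f x = ∫ ξ, ψ ξ • 𝓕 f ξ := by
    simpa using! VectorFourier.integral_fourierIntegral_smul_eq_flip (L := innerₗ V)
      Real.continuous_fourierChar continuous_inner ψ.integrable hf
  simpa [hψ, h] using parseval

theorem fourier_comp_sub_const (f : V → F) (a ξ : V) :
    𝓕 (fun v ↦ f (v - a)) ξ = Real.fourierChar (-⟪a, ξ⟫) • 𝓕 f ξ := by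
  simpa [Function.comp_def, sub_eq_add_neg] using! congrFun
    (VectorFourier.fourierIntegral_comp_add_right Real.fourierChar volume (innerₗ V) f (-a)) ξ

theorem fourier_comp_const_sub (f : V → F) (a ξ : V) :
    𝓕 (fun v ↦ f (a - v)) ξ = Real.fourierChar (-⟪a, ξ⟫) • 𝓕 f (-ξ) := by
  simpa [← Real.fourierInv_eq_fourier_comp_neg, Real.fourierInv_eq_fourier_neg] using
    fourier_comp_sub_const (fun v ↦ f (-v)) a ξ

theorem exists_schwartz_fourier_eq_integral_comp_sub_mul {K Ψ : V → ℂ} (hK : Integrable K)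
    (hKs : ContDiff ℝ ∞ (𝓕 K)) (hK0 : ∀ ξ, 𝓕 K ξ ≠ 0) (hΨ : ContDiff ℝ ∞ Ψ)
    (hΨc : HasCompactSupport Ψ) :
    ∃ φ : 𝓢(V, ℂ), ∀ u, 𝓕 Ψ u = ∫ w, K (u - w) * φ w := by
  have quotient_smooth : ContDiff ℝ ∞ fun ξ ↦ Ψ ξ * (𝓕 K (-ξ))⁻¹ :=
    hΨ.mul ((hKs.comp contDiff_neg).inv fun ξ ↦ hK0 (-ξ))
  let Φ : 𝓢(V, ℂ) := hΨc.mul_right.toSchwartzMap quotient_smooth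
  refine ⟨𝓕 Φ, fun u ↦ ?_⟩
  have fourier_mul (ξ : V) :
      𝓕 (fun w ↦ K (u - w)) ξ • Φ ξ = Real.fourierChar (-⟪ξ, u⟫) • Ψ ξ := by
    have hΦ : Φ ξ = Ψ ξ * (𝓕 K (-ξ))⁻¹ := rfl
    rw [fourier_comp_const_sub, hΦ, smul_eq_mul, smul_mul_assoc, mul_left_comm,
      mul_inv_cancel₀ (hK0 _), mul_one, real_inner_comm]
  calc 𝓕 Ψ u = ∫ ξ, 𝓕 (fun w ↦ K (u - w)) ξ • Φ ξ := by simp_rw [fourier_mul]; rfl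
    _ = ∫ w, K (u - w) * (𝓕 Φ : 𝓢(V, ℂ)) w := by
      simpa using! VectorFourier.integral_fourierIntegral_smul_eq_flip (L := innerₗ V)
        Real.continuous_fourierChar continuous_inner (hK.comp_sub_left u) Φ.integrable

theorem integral_mul_integral_comp_sub_mul_eq_zero {K g φ : V → ℂ} (hK : Integrable K)
    (hφ : Integrable φ) (hg : MemLp g ⊤) (h : ∀ w, ∫ u, K (u - w) * g u = 0) :
    ∫ u, g u * ∫ w, K (u - w) * φ w = 0 := by
  have hprod : Integrable (fun p : V × V ↦ g p.1 * (K (p.1 - p.2) * φ p.2)) := by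
    have hKφ : Integrable (fun p : V × V ↦ K (p.1 - p.2) * φ p.2) :=
      (hφ.convolution_integrand (ContinuousLinearMap.mul ℂ ℂ) hK).congr
        (ae_of_all _ fun p ↦ mul_comm _ _)
    exact hKφ.mul_of_top_right
      (memLp_top_comp_quasiMeasurePreserving hg Measure.quasiMeasurePreserving_fst)
  calc ∫ u, g u * ∫ w, K (u - w) * φ w = ∫ u, ∫ w, g u * (K (u - w) * φ w) := by
        simp_rw [integral_const_mul]
    _ = ∫ w, ∫ u, K (u - w) * g u * φ w := by
        rw [integral_integral_swap hprod]
        simp_rw [← mul_assoc, mul_comm (g _)]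
    _ = 0 := by simp_rw [integral_mul_const, h, zero_mul, integral_zero]

theorem exists_contDiff_hasCompactSupport_fourier_ne_zero (u : V) :
    ∃ Ψ : V → ℂ, ContDiff ℝ ∞ Ψ ∧ HasCompactSupport Ψ ∧ 𝓕 Ψ u ≠ 0 := by
  obtain ⟨χ⟩ : Nonempty (ContDiffBump (0 : V)) := inferInstance
  have hχ : ∫ ξ, (χ ξ : ℂ) ≠ 0 := by
    rw [integral_complex_ofReal]
    exact ofReal_ne_zero.2 χ.integral_pos.ne'
  refine ⟨fun ξ ↦ cexp ((2 * π * ⟪ξ, u⟫ : ℝ) * I) * χ ξ, ?_, ?_, ?_⟩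
  · have hphase : ContDiff ℝ ∞ fun ξ : V ↦ 2 * π * ⟪ξ, u⟫ :=
      contDiff_const.mul (contDiff_id.inner ℝ contDiff_const)
    exact ((ofRealCLM.contDiff.comp hphase).mul contDiff_const).cexp.mul
      (ofRealCLM.contDiff.comp χ.contDiff)
  · exact (χ.hasCompactSupport.comp_left ofReal_zero).mul_left
  · convert hχ using 2
    rw [Real.fourier_eq']
    refine integral_congr_ae (ae_of_all _ fun ξ ↦ ?_)
    simp only [smul_eq_mul, ← mul_assoc, ← Complex.exp_add]
    simp

theorem ae_eq_zero_of_integral_comp_sub_mul_eq_zero {K g : V → ℂ} (hK : Integrable K)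
    (hKs : ContDiff ℝ ∞ (𝓕 K)) (hK0 : ∀ ξ, 𝓕 K ξ ≠ 0) (hg : MemLp g ⊤)
    (h : ∀ w, ∫ u, K (u - w) * g u = 0) : ∀ᵐ u, g u = 0 := by
  have mul_fourier_eq_zero {Ψ : V → ℂ} (hΨ : ContDiff ℝ ∞ Ψ) (hΨc : HasCompactSupport Ψ) :
      ∀ᵐ u, g u * 𝓕 Ψ u = 0 := by
    have hgΨ : Integrable fun u ↦ g u * 𝓕 Ψ u :=
      (𝓕 (hΨc.toSchwartzMap hΨ)).integrable.mul_of_top_right hg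
    refine ae_eq_zero_of_fourier_eq_zero hgΨ (funext fun a ↦ ?_)
    obtain ⟨φ, hφ⟩ := exists_schwartz_fourier_eq_integral_comp_sub_mul hK hKs hK0
      (Ψ := fun ξ ↦ Ψ (ξ - a)) (by fun_prop) (hΨc.comp_homeomorph (Homeomorph.subRight a))
    calc 𝓕 (fun u ↦ g u * 𝓕 Ψ u) a = ∫ u, g u * 𝓕 (fun ξ ↦ Ψ (ξ - a)) u := by
          simp_rw [Real.fourier_eq (fun u ↦ g u * 𝓕 Ψ u), fourier_comp_sub_const, mul_smul_comm,
            real_inner_comm]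
      _ = 0 := by
          simp_rw [hφ]
          exact integral_mul_integral_comp_sub_mul_eq_zero hK φ.integrable hg h
  refine measure_null_of_locally_null _ fun u _ ↦ ?_
  obtain ⟨Ψ, hΨ, hΨc, hΨu⟩ := exists_contDiff_hasCompactSupport_fourier_ne_zero u
  have hΨ_near : ∀ᶠ v in nhds u, 𝓕 Ψ v ≠ 0 :=
    (𝓕 (hΨc.toSchwartzMap hΨ)).continuous.continuousAt.eventually_ne hΨu
  refine ⟨_, inter_mem self_mem_nhdsWithin (nhdsWithin_le_nhds hΨ_near), ?_⟩
  refine measure_mono_null (fun v hv ↦ ?_) (ae_iff.1 (mul_fourier_eq_zero hΨ hΨc))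
  exact mul_ne_zero hv.1 hv.2

end Wiener

section LogCoordinates

variable {n : ℕ}

/-- The logarithmic parametrisation `u ↦ (e^{u₁}, …, e^{uₙ})` of the positive orthant, with domain
`EuclideanSpace` so that the Fourier transform applies. -/
def expVec (u : EuclideanSpace ℝ (Fin n)) : Fin n → ℝ := fun i ↦ Real.exp (u i)

theorem expVec_mem_posOrth (u : EuclideanSpace ℝ (Fin n)) : expVec u ∈ posOrth n :=
  fun _ ↦ Real.exp_pos _

theorem range_expVec : range (expVec (n := n)) = posOrth n := by
  refine (range_subset_iff.2 expVec_mem_posOrth).antisymm fun x hx ↦ ?_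
  exact ⟨WithLp.toLp 2 fun i ↦ Real.log (x i), funext fun i ↦ Real.exp_log (hx i)⟩

theorem continuous_expVec : Continuous (expVec (n := n)) := by
  unfold expVec
  fun_prop

theorem expVec_injective : Function.Injective (expVec (n := n)) := fun u v h ↦ by
  ext i
  exact Real.exp_injective (congrFun h i)

theorem measurableEmbedding_expVec : MeasurableEmbedding (expVec (n := n)) :=
  continuous_expVec.measurableEmbedding expVec_injective

theorem measurableSet_posOrth : MeasurableSet (posOrth n) :=
  range_expVec (n := n) ▸ measurableEmbedding_expVec.measurableSet_range

theorem hasFDerivAt_pi_exp {ι : Type*} [Fintype ι] [DecidableEq ι] (x : ι → ℝ) :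
    HasFDerivAt (fun (y : ι → ℝ) i ↦ Real.exp (y i))
      (Matrix.toLin' (Matrix.diagonal fun i ↦ Real.exp (x i))).toContinuousLinearMap x := by
  refine hasFDerivAt_pi'.2 fun i ↦ ?_
  convert! (hasFDerivAt_apply i x).exp using 1
  ext v
  simp [Matrix.mulVec_diagonal]

theorem map_expVec_withDensity :
    (volume.withDensity fun u : EuclideanSpace ℝ (Fin n) ↦
      ENNReal.ofReal (Real.exp (∑ i, u i))).map expVec = volume.restrict (posOrth n) := by
  have hpi := map_withDensity_abs_det_fderiv_eq_addHaar volume nullMeasurableSet_univ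
    (fun x _ ↦ (hasFDerivAt_pi_exp (ι := Fin n) x).hasFDerivWithinAt)
    (fun x _ y _ h ↦ funext fun i ↦ Real.exp_injective (congrFun h i))
  have himage : (fun (y : Fin n → ℝ) i ↦ Real.exp (y i)) '' univ = posOrth n := by
    rw [← range_expVec, image_univ, ← (WithLp.equiv 2 (Fin n → ℝ)).surjective.range_comp]
    rfl
  have hdet (x : Fin n → ℝ) :
      |(Matrix.toLin' (Matrix.diagonal fun i ↦ Real.exp (x i))).toContinuousLinearMap.det| =
        Real.exp (∑ i, x i) := by
    simp [LinearMap.det_toContinuousLinearMap, Real.exp_sum, Finset.abs_prod]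
  simp_rw [hdet, himage, Measure.restrict_univ] at hpi
  ext s hs
  have hpre : MeasurableSet ((fun (y : Fin n → ℝ) i ↦ Real.exp (y i)) ⁻¹' s) :=
    hs.preimage (by fun_prop)
  rw [← hpi, Measure.map_apply (f := fun (y : Fin n → ℝ) i ↦ Real.exp (y i)) (by fun_prop) hs,
    withDensity_apply _ hpre,
    ← (PiLp.volume_preserving_ofLp (Fin n)).setLIntegral_comp_preimage hpre (by fun_prop),
    Measure.map_apply continuous_expVec.measurable hs,
    withDensity_apply _ (hs.preimage continuous_expVec.measurable)]
  rfl

theorem integral_posOrth_eq {E : Type*} [NormedAddCommGroup E] [NormedSpace ℝ E]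
    (f : (Fin n → ℝ) → E) :
    ∫ x in posOrth n, f x =
      ∫ u : EuclideanSpace ℝ (Fin n), Real.exp (∑ i, u i) • f (expVec u) := by
  rw [← map_expVec_withDensity, measurableEmbedding_expVec.integral_map,
    integral_withDensity_eq_integral_toReal_smul (by fun_prop) (by simp)]
  simp [Real.exp_nonneg]

theorem integrableOn_posOrth_iff {E : Type*} [NormedAddCommGroup E] [NormedSpace ℝ E]
    (f : (Fin n → ℝ) → E) :
    IntegrableOn f (posOrth n) ↔
      Integrable fun u : EuclideanSpace ℝ (Fin n) ↦ Real.exp (∑ i, u i) • f (expVec u) := by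
  rw [IntegrableOn, ← map_expVec_withDensity, measurableEmbedding_expVec.integrable_map_iff,
    integrable_withDensity_iff_integrable_smul' (by fun_prop) (by simp)]
  simp [Real.exp_nonneg]

theorem ae_posOrth_iff {P : (Fin n → ℝ) → Prop} :
    (∀ᵐ x ∂volume.restrict (posOrth n), P x) ↔
      ∀ᵐ u : EuclideanSpace ℝ (Fin n), P (expVec u) := by
  rw [← map_expVec_withDensity, measurableEmbedding_expVec.ae_map_iff,
    ae_withDensity_iff (by fun_prop)]
  simp [Real.exp_pos]

theorem quasiMeasurePreserving_expVec :
    Measure.QuasiMeasurePreserving (expVec (n := n)) volume (volume.restrict (posOrth n)) :=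
  ⟨continuous_expVec.measurable, Measure.AbsolutelyContinuous.mk fun s hs h ↦ by
    rw [Measure.map_apply continuous_expVec.measurable hs]
    exact measure_eq_zero_iff_ae_notMem.2 (ae_posOrth_iff.1 (measure_eq_zero_iff_ae_notMem.1 h))⟩

end LogCoordinates

section LogPullback

open scoped FourierTransform

variable {n : ℕ}

/-- The function `x ↦ x^z g(x)` read in logarithmic coordinates `x = e^u`. The Mellin transform of
`g` at `z` is its integral, because `x^{-I} dx` becomes `du`. -/
def logPullback (z : Fin n → ℂ) (g : (Fin n → ℝ) → ℝ) (u : EuclideanSpace ℝ (Fin n)) : ℂ :=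
  cexp (∑ i, z i * u i) * g (expVec u)

theorem prod_expVec_cpow (u : EuclideanSpace ℝ (Fin n)) (z : Fin n → ℂ) :
    ∏ i, (expVec u i : ℂ) ^ z i = cexp (∑ i, z i * u i) := by
  rw [Complex.exp_sum]
  refine Finset.prod_congr rfl fun i _ ↦ ?_
  rw [expVec, cpow_def_of_ne_zero (ofReal_ne_zero.2 (Real.exp_pos _).ne'),
    ← ofReal_log (Real.exp_pos _).le, Real.log_exp, mul_comm]

theorem exp_sum_smul_prod_cpow_sub_one_mul (z : Fin n → ℂ) (g : (Fin n → ℝ) → ℝ)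
    (u : EuclideanSpace ℝ (Fin n)) :
    Real.exp (∑ i, u i) • ((∏ i, (expVec u i : ℂ) ^ (z i - 1)) * g (expVec u)) =
      logPullback z g u := by
  rw [prod_expVec_cpow u fun i ↦ z i - 1, real_smul, ← mul_assoc, ofReal_exp, ← Complex.exp_add,
    ofReal_sum, ← Finset.sum_add_distrib, logPullback]
  congr! 3
  ring

theorem mellinT_eq_integral_logPullback (g : (Fin n → ℝ) → ℝ) (z : Fin n → ℂ) :
    mellinT n g z = ∫ u, logPullback z g u := by
  rw [mellinT, integral_posOrth_eq]
  simp_rw [exp_sum_smul_prod_cpow_sub_one_mul]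

theorem integrableOn_mellin_integrand_iff (g : (Fin n → ℝ) → ℝ) (z : Fin n → ℂ) :
    IntegrableOn (fun x ↦ (∏ i, (x i : ℂ) ^ (z i - 1)) * g x) (posOrth n) ↔
      Integrable (logPullback z g) := by
  rw [integrableOn_posOrth_iff]
  simp_rw [exp_sum_smul_prod_cpow_sub_one_mul]

theorem norm_logPullback (z : Fin n → ℂ) (g : (Fin n → ℝ) → ℝ) (u : EuclideanSpace ℝ (Fin n)) :
    ‖logPullback z g u‖ = Real.exp (∑ i, (z i).re * u i) * |g (expVec u)| := by
  simp [logPullback, norm_exp]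

theorem aestronglyMeasurable_logPullback {g : (Fin n → ℝ) → ℝ}
    (hg : AEStronglyMeasurable g (volume.restrict (posOrth n))) (z : Fin n → ℂ) :
    AEStronglyMeasurable (logPullback z g) := by
  have hexp : Continuous fun u : EuclideanSpace ℝ (Fin n) ↦ cexp (∑ i, z i * u i) := by fun_prop
  exact hexp.aestronglyMeasurable.mul (continuous_ofReal.comp_aestronglyMeasurable
    (hg.comp_quasiMeasurePreserving quasiMeasurePreserving_expVec))

theorem expVec_add (u v : EuclideanSpace ℝ (Fin n)) :
    expVec (u + v) = fun i ↦ expVec v i * expVec u i :=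
  funext fun _ ↦ by rw [mul_comm]; exact Real.exp_add _ _

theorem logPullback_comp_expVec_mul (z : Fin n → ℂ) (g : (Fin n → ℝ) → ℝ)
    (u v : EuclideanSpace ℝ (Fin n)) :
    logPullback z (fun x ↦ g fun i ↦ expVec v i * x i) u =
      cexp (-∑ i, z i * v i) * logPullback z g (u + v) := by
  simp only [logPullback, expVec_add, ← mul_assoc, ← Complex.exp_add, PiLp.add_apply, ofReal_add,
    mul_add, Finset.sum_add_distrib]
  ring_nf

theorem integrable_logPullback_comp_expVec_mul {z : Fin n → ℂ} {g : (Fin n → ℝ) → ℝ}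
    (hg : Integrable (logPullback z g)) (v : EuclideanSpace ℝ (Fin n)) :
    Integrable (logPullback z fun x ↦ g fun i ↦ expVec v i * x i) := by
  simp_rw [funext fun u ↦ logPullback_comp_expVec_mul z g u v]
  exact (hg.comp_add_right v).const_mul _

theorem mellinT_comp_expVec_mul (g : (Fin n → ℝ) → ℝ) (z : Fin n → ℂ)
    (v : EuclideanSpace ℝ (Fin n)) :
    mellinT n (fun x ↦ g fun i ↦ expVec v i * x i) z = cexp (-∑ i, z i * v i) * mellinT n g z := by
  simp_rw [mellinT_eq_integral_logPullback, logPullback_comp_expVec_mul]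
  rw [integral_const_mul, integral_add_right_eq_self]

theorem fourier_logPullback (z : Fin n → ℂ) (g : (Fin n → ℝ) → ℝ) (ξ : EuclideanSpace ℝ (Fin n)) :
    𝓕 (logPullback z g) ξ = mellinT n g fun i ↦ z i + I * (-(2 * Real.pi * ξ i) : ℝ) := by
  rw [mellinT_eq_integral_logPullback, Real.fourier_eq']
  refine integral_congr_ae (ae_of_all _ fun u ↦ ?_)
  simp only [logPullback, smul_eq_mul, ← mul_assoc, ← Complex.exp_add, add_mul,
    Finset.sum_add_distrib, PiLp.inner_apply, ofReal_mul, ofReal_sum, Finset.mul_sum,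
    Finset.sum_mul]
  rw [add_comm]
  congr! 4
  simp only [ofReal_neg, ofReal_ofNat, neg_mul, RCLike.inner_apply, Real.ringHom_apply, ofReal_mul,
    mul_neg, neg_inj]
  ring

theorem integral_logPullback_sub_mul_logPullback_one_sub (z : Fin n → ℂ)
    (g f : (Fin n → ℝ) → ℝ) (w : EuclideanSpace ℝ (Fin n)) :
    ∫ u, logPullback z g (u - w) * logPullback (fun i ↦ 1 - z i) f u =
      cexp (-∑ i, z i * w i) *
        ((∫ x in posOrth n, g (fun i ↦ expVec (-w) i * x i) * f x : ℝ) : ℂ) := by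
  rw [integral_posOrth_eq, ← integral_complex_ofReal, ← integral_const_mul]
  refine integral_congr_ae (ae_of_all _ fun u ↦ ?_)
  have hexp : cexp (∑ i, z i * (u - w) i) * cexp (∑ i, (1 - z i) * u i) =
      cexp (-∑ i, z i * w i) * cexp (∑ i, u i) := by
    simp only [← Complex.exp_add, ← Finset.sum_add_distrib, ← Finset.sum_neg_distrib]
    congr! 2
    simp only [PiLp.sub_apply, ofReal_sub]
    ring
  simp only [logPullback, sub_eq_add_neg u w, ← expVec_add] at hexp ⊢
  simp only [smul_eq_mul, ofReal_mul, ofReal_exp, ofReal_sum]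
  linear_combination hexp * g (expVec (u + -w)) * f (expVec u)

end LogPullback

section ExponentialDecay

variable {V F : Type*} [NormedAddCommGroup V] [MeasurableSpace V] [BorelSpace V]
  [NormedAddCommGroup F]

theorem exists_one_add_pow_mul_exp_neg_mul_le {ε : ℝ} (hε : 0 < ε) (m : ℕ) :
    ∃ C, ∀ t : ℝ, 0 ≤ t → (1 + t) ^ m * Real.exp (-(ε * t)) ≤ C := by
  refine ⟨m.factorial * (ε ^ m)⁻¹ * Real.exp ε, fun t ht ↦ ?_⟩
  have hpow := Real.pow_div_factorial_le_exp (ε * (1 + t)) (by positivity) m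
  rw [div_le_iff₀ (by positivity), mul_pow, mul_add, mul_one, Real.exp_add] at hpow
  rw [Real.exp_neg, ← div_eq_mul_inv, div_le_iff₀ (Real.exp_pos _)]
  calc (1 + t) ^ m = (ε ^ m)⁻¹ * (ε ^ m * (1 + t) ^ m) := by field_simp
    _ ≤ (ε ^ m)⁻¹ * (Real.exp ε * Real.exp (ε * t) * m.factorial) := by gcongr
    _ = m.factorial * (ε ^ m)⁻¹ * Real.exp ε * Real.exp (ε * t) := by ring

theorem integrable_pow_norm_mul_exp_neg_mul_norm [NormedSpace ℝ V] [FiniteDimensional ℝ V]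
    (μ : Measure V) [μ.IsAddHaarMeasure] {ε : ℝ} (hε : 0 < ε) (k : ℕ) :
    Integrable (fun v ↦ ‖v‖ ^ k * Real.exp (-(ε * ‖v‖))) μ := by
  let r : ℕ := Module.finrank ℝ V + 1
  have hdom : Integrable (fun v : V ↦ (1 + ‖v‖) ^ (-(r : ℝ))) μ :=
    integrable_one_add_norm (by simp [r])
  obtain ⟨C, hC⟩ := exists_one_add_pow_mul_exp_neg_mul_le hε (k + r)
  refine (hdom.const_mul C).mono' (Continuous.aestronglyMeasurable (by fun_prop))
    (ae_of_all _ fun v ↦ ?_)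
  rw [Real.norm_of_nonneg (by positivity), Real.rpow_neg (by positivity), Real.rpow_natCast,
    ← div_eq_mul_inv, le_div_iff₀ (by positivity)]
  calc ‖v‖ ^ k * Real.exp (-(ε * ‖v‖)) * (1 + ‖v‖) ^ r
      ≤ (1 + ‖v‖) ^ k * Real.exp (-(ε * ‖v‖)) * (1 + ‖v‖) ^ r := by gcongr; linarith
    _ = (1 + ‖v‖) ^ (k + r) * Real.exp (-(ε * ‖v‖)) := by ring
    _ ≤ C := hC _ (norm_nonneg v)

theorem integrable_pow_norm_mul_norm_of_exp_decay [NormedSpace ℝ V] [FiniteDimensional ℝ V]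
    {μ : Measure V} [μ.IsAddHaarMeasure] {K : V → F} (hK : AEStronglyMeasurable K μ) {C ε : ℝ}
    (hε : 0 < ε) (hdecay : ∀ v, ‖K v‖ ≤ C * Real.exp (-(ε * ‖v‖))) (k : ℕ) :
    Integrable (fun v ↦ ‖v‖ ^ k * ‖K v‖) μ := by
  refine ((integrable_pow_norm_mul_exp_neg_mul_norm μ hε k).const_mul C).mono'
    ((by fun_prop : Continuous fun v : V ↦ ‖v‖ ^ k).aestronglyMeasurable.mul hK.norm)
    (ae_of_all _ fun v ↦ ?_)
  rw [Real.norm_of_nonneg (by positivity), mul_left_comm]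
  gcongr
  exact hdecay v

end ExponentialDecay

section CostFunction

open scoped FourierTransform ContDiff

variable {n : ℕ} {q : (Fin n → ℝ) → ℝ}

/-- Cost functions that are merely measurable instead of `C¹`. By homogeneity every nonempty level
set is a dilate of the unit level set, so boundedness is only recorded for the latter. -/
structure IsMeasurableCostFun (n : ℕ) (q : (Fin n → ℝ) → ℝ) : Prop where
  aestronglyMeasurable : AEStronglyMeasurable q (volume.restrict (posOrth n))
  pos : ∀ x ∈ posOrth n, 0 < q x
  map_mul : ∀ t : ℝ, 0 < t → ∀ x ∈ posOrth n, q (fun i ↦ t * x i) = t * q x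
  isBounded_level_one : Bornology.IsBounded {x | x ∈ posOrth n ∧ q x = 1}

theorem IsCostFun.isMeasurableCostFun (hq : IsCostFun n q) : IsMeasurableCostFun n q :=
  ⟨hq.1.continuousOn.aestronglyMeasurable measurableSet_posOrth, hq.2.1, hq.2.2.1, hq.2.2.2 1⟩

/-- The profit `max {0, 1 - q(x)}` at unit output price. -/
def unitProfit (q : (Fin n → ℝ) → ℝ) (x : Fin n → ℝ) : ℝ := max 0 (1 - q x)

namespace IsMeasurableCostFun

theorem max_sub_eq_mul_unitProfit (hq : IsMeasurableCostFun n q) {t : ℝ} (ht : 0 < t)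
    {x : Fin n → ℝ} (hx : x ∈ posOrth n) :
    max 0 (t - q x) = t * unitProfit q fun i ↦ t⁻¹ * x i := by
  rw [unitProfit, hq.map_mul _ (inv_pos.2 ht) x hx, mul_max_of_nonneg _ _ ht.le, mul_zero, mul_sub,
    mul_one, mul_inv_cancel_left₀ ht.ne']

theorem exists_le_of_lt_one (hq : IsMeasurableCostFun n q) :
    ∃ L : ℝ, 0 ≤ L ∧ ∀ u, q (expVec u) < 1 → ∀ i, u i ≤ L := by
  obtain ⟨R, hR⟩ := hq.isBounded_level_one.exists_norm_le
  refine ⟨Real.log (max R 1), Real.log_nonneg (le_max_right _ _), fun u hu i ↦ ?_⟩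
  have hu_pos := hq.pos _ (expVec_mem_posOrth u)
  have scaled_pos (j : Fin n) : 0 < (q (expVec u))⁻¹ * expVec u j :=
    mul_pos (inv_pos.2 hu_pos) (expVec_mem_posOrth u j)
  have scaled_level : q (fun j ↦ (q (expVec u))⁻¹ * expVec u j) = 1 := by
    rw [hq.map_mul _ (inv_pos.2 hu_pos) _ (expVec_mem_posOrth u), inv_mul_cancel₀ hu_pos.ne']
  rw [Real.le_log_iff_exp_le (by positivity)]
  calc expVec u i ≤ (q (expVec u))⁻¹ * expVec u i :=
        le_mul_of_one_le_left (expVec_mem_posOrth u i).le ((one_le_inv₀ hu_pos).2 hu.le)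
    _ ≤ ‖fun j ↦ (q (expVec u))⁻¹ * expVec u j‖ :=
        (Real.le_norm_self _).trans (norm_le_pi_norm (fun j ↦ (q (expVec u))⁻¹ * expVec u j) i)
    _ ≤ max R 1 := (hR _ ⟨scaled_pos, scaled_level⟩).trans (le_max_left _ _)

theorem abs_unitProfit_le_one (hq : IsMeasurableCostFun n q) {x : Fin n → ℝ}
    (hx : x ∈ posOrth n) : |unitProfit q x| ≤ 1 := by
  rw [unitProfit, abs_of_nonneg (le_max_left _ _)]
  exact max_le zero_le_one (by linarith [hq.pos x hx])

theorem aestronglyMeasurable_unitProfit (hq : IsMeasurableCostFun n q) :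
    AEStronglyMeasurable (unitProfit q) (volume.restrict (posOrth n)) :=
  (continuous_const.max (continuous_const.sub continuous_id)).comp_aestronglyMeasurable
    hq.aestronglyMeasurable

end IsMeasurableCostFun

theorem euclideanSpace_norm_le_sum_abs {ι : Type*} [Fintype ι] (u : EuclideanSpace ℝ ι) :
    ‖u‖ ≤ ∑ i, |u i| := by
  rw [EuclideanSpace.norm_eq, Real.sqrt_le_left (Finset.sum_nonneg fun i _ ↦ abs_nonneg _)]
  exact Finset.sum_sq_le_sq_sum_of_nonneg fun i _ ↦ abs_nonneg _

theorem sum_mul_le_sub_mul_norm {ι : Type*} [Fintype ι] {c : ι → ℝ} {ε L : ℝ} (hε : 0 ≤ ε)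
    (hc : ∀ i, ε ≤ c i) (hL : 0 ≤ L) {u : EuclideanSpace ℝ ι} (hu : ∀ i, u i ≤ L) :
    ∑ i, c i * u i ≤ 2 * L * ∑ i, c i - ε * ‖u‖ := by
  have hcoord (i : ι) : c i * u i ≤ 2 * L * c i - ε * |u i| := by
    have habs : u i + |u i| ≤ 2 * L := by
      rcases abs_cases (u i) with h | h <;> linarith [hu i]
    linarith [mul_le_mul_of_nonneg_right (hc i) (abs_nonneg (u i)),
      mul_le_mul_of_nonneg_left habs (hε.trans (hc i))]
  calc ∑ i, c i * u i ≤ ∑ i, (2 * L * c i - ε * |u i|) := Finset.sum_le_sum fun i _ ↦ hcoord i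
    _ = 2 * L * ∑ i, c i - ε * ∑ i, |u i| := by
        rw [Finset.sum_sub_distrib, ← Finset.mul_sum, ← Finset.mul_sum]
    _ ≤ 2 * L * ∑ i, c i - ε * ‖u‖ := by
        gcongr
        exact euclideanSpace_norm_le_sum_abs u

theorem exists_pos_forall_le {ι : Type*} [Finite ι] {c : ι → ℝ} (hc : ∀ i, 0 < c i) :
    ∃ ε > 0, ∀ i, ε ≤ c i := by
  rcases isEmpty_or_nonempty ι with _ | _
  · exact ⟨1, one_pos, isEmptyElim⟩
  · obtain ⟨i, hi⟩ := Finite.exists_min c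
    exact ⟨c i, hc i, hi⟩

namespace IsMeasurableCostFun

variable {z : Fin n → ℂ}

theorem exists_norm_logPullback_unitProfit_le (hq : IsMeasurableCostFun n q)
    (hz : ∀ i, 0 < (z i).re) :
    ∃ C ε : ℝ, 0 < ε ∧
      ∀ u, ‖logPullback z (unitProfit q) u‖ ≤ C * Real.exp (-(ε * ‖u‖)) := by
  obtain ⟨L, hL, hqL⟩ := hq.exists_le_of_lt_one
  obtain ⟨ε, hε, hεz⟩ := exists_pos_forall_le hz
  refine ⟨Real.exp (2 * L * ∑ i, (z i).re), ε, hε, fun u ↦ ?_⟩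
  rw [norm_logPullback, ← Real.exp_add, ← sub_eq_add_neg]
  rcases lt_or_ge (q (expVec u)) 1 with hu | hu
  · exact (mul_le_of_le_one_right (Real.exp_nonneg _)
      (hq.abs_unitProfit_le_one (expVec_mem_posOrth u))).trans
      (Real.exp_le_exp.2 (sum_mul_le_sub_mul_norm hε.le hεz hL (hqL u hu)))
  · rw [unitProfit, max_eq_left (sub_nonpos.2 hu), abs_zero, mul_zero]
    exact Real.exp_nonneg _

theorem integrable_pow_norm_mul_norm_logPullback_unitProfit (hq : IsMeasurableCostFun n q)
    (hz : ∀ i, 0 < (z i).re) (k : ℕ) :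
    Integrable fun u ↦ ‖u‖ ^ k * ‖logPullback z (unitProfit q) u‖ := by
  obtain ⟨C, ε, hε, hdecay⟩ := hq.exists_norm_logPullback_unitProfit_le hz
  exact integrable_pow_norm_mul_norm_of_exp_decay
    (aestronglyMeasurable_logPullback hq.aestronglyMeasurable_unitProfit z) hε hdecay k

theorem integrable_logPullback_unitProfit (hq : IsMeasurableCostFun n q)
    (hz : ∀ i, 0 < (z i).re) : Integrable (logPullback z (unitProfit q)) := by
  have hnorm := hq.integrable_pow_norm_mul_norm_logPullback_unitProfit hz 0
  simp only [pow_zero, one_mul] at hnorm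
  exact (integrable_norm_iff
    (aestronglyMeasurable_logPullback hq.aestronglyMeasurable_unitProfit z)).1 hnorm

theorem contDiff_fourier_logPullback_unitProfit (hq : IsMeasurableCostFun n q)
    (hz : ∀ i, 0 < (z i).re) : ContDiff ℝ ∞ (𝓕 (logPullback z (unitProfit q))) :=
  Real.contDiff_fourier fun k _ ↦ hq.integrable_pow_norm_mul_norm_logPullback_unitProfit hz k

end IsMeasurableCostFun

end CostFunction

section Gamma

variable {n : ℕ} {q : (Fin n → ℝ) → ℝ} {z : Fin n → ℂ}

theorem integral_max_sub_mul_exp_neg {s : ℝ} (hs : 0 ≤ s) :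
    ∫ t in Ioi 0, max 0 (t - s) * Real.exp (-t) = Real.exp (-s) := by
  have eq_zero_below (t : ℝ) (ht : t ∈ Ioi 0 \ Ioi s) : max 0 (t - s) * Real.exp (-t) = 0 := by
    rw [max_eq_left (sub_nonpos.2 (not_lt.1 ht.2)), zero_mul]
  have hGamma : ∫ r in Ioi (0 : ℝ), r * Real.exp (-r) = 1 := by
    rw [← Real.Gamma_two, Real.Gamma_eq_integral two_pos]
    norm_num [mul_comm]
  calc ∫ t in Ioi 0, max 0 (t - s) * Real.exp (-t)
      = ∫ t in Ioi s, max 0 (t - s) * Real.exp (-t) :=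
        setIntegral_eq_of_subset_of_forall_sdiff_eq_zero measurableSet_Ioi (Ioi_subset_Ioi hs)
          eq_zero_below
    _ = ∫ r in Ioi 0, max 0 r * Real.exp (-(r + s)) := by
        rw [← (measurePreserving_add_right volume s).setIntegral_preimage_emb
          (measurableEmbedding_addRight s)]
        simp
    _ = ∫ r in Ioi 0, Real.exp (-s) * (r * Real.exp (-r)) :=
        setIntegral_congr_fun measurableSet_Ioi fun r (hr : 0 < r) ↦ by
          rw [max_eq_right hr.le, neg_add, Real.exp_add]
          ring
    _ = Real.exp (-s) := by rw [integral_const_mul, hGamma, mul_one]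

theorem re_two_add_sum_pos (hz : ∀ i, 0 < (z i).re) : 0 < (2 + ∑ i, z i).re := by
  have hsum : 0 ≤ ∑ i, (z i).re := Finset.sum_nonneg fun i _ ↦ (hz i).le
  simp only [add_re, re_ofNat, re_sum]
  linarith

namespace IsMeasurableCostFun

theorem logPullback_max_sub (hq : IsMeasurableCostFun n q) {t : ℝ} (ht : 0 < t)
    (u : EuclideanSpace ℝ (Fin n)) :
    logPullback z (fun x ↦ max 0 (t - q x)) u = (t : ℂ) ^ (2 + ∑ i, z i - 1) *
      logPullback z (unitProfit q) (u + WithLp.toLp 2 fun _ ↦ -Real.log t) := by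
  have hinv : expVec (WithLp.toLp 2 fun _ : Fin n ↦ -Real.log t) = fun _ ↦ t⁻¹ :=
    funext fun _ ↦ by simp [expVec, Real.exp_neg, Real.exp_log ht]
  have hpow : (t : ℂ) ^ (2 + ∑ i, z i - 1) = t * cexp (-∑ i, z i * (-Real.log t : ℝ)) := by
    have ht' : (t : ℂ) ≠ 0 := ofReal_ne_zero.2 ht.ne'
    rw [show 2 + ∑ i, z i - 1 = 1 + ∑ i, z i by ring, cpow_add _ _ ht', cpow_one,
      cpow_def_of_ne_zero ht', ← ofReal_log ht.le, ← Finset.sum_mul]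
    simp [mul_comm]
  have hscale := logPullback_comp_expVec_mul z (unitProfit q) u (WithLp.toLp 2 fun _ ↦ -Real.log t)
  rw [hpow, mul_assoc, ← hscale, hinv]
  simp only [logPullback, hq.max_sub_eq_mul_unitProfit ht (expVec_mem_posOrth u), ofReal_mul]
  ring

theorem aestronglyMeasurable_prod_logPullback_max_sub (hq : IsMeasurableCostFun n q)
    (z : Fin n → ℂ) (ν : Measure ℝ) :
    AEStronglyMeasurable (fun p : EuclideanSpace ℝ (Fin n) × ℝ ↦
      logPullback z (fun x ↦ max 0 (p.2 - q x)) p.1 * (Real.exp (-p.2) : ℝ)) (volume.prod ν) := by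
  have hq_fst : AEStronglyMeasurable (fun p : EuclideanSpace ℝ (Fin n) × ℝ ↦ q (expVec p.1))
      (volume.prod ν) :=
    (hq.aestronglyMeasurable.comp_quasiMeasurePreserving quasiMeasurePreserving_expVec).comp_fst
  have hcexp : Continuous fun p : EuclideanSpace ℝ (Fin n) × ℝ ↦ cexp (∑ i, z i * p.1 i) := by
    fun_prop
  have hexp : Continuous fun p : EuclideanSpace ℝ (Fin n) × ℝ ↦ ((Real.exp (-p.2) : ℝ) : ℂ) := by
    fun_prop
  have hmax : AEStronglyMeasurable (fun p : EuclideanSpace ℝ (Fin n) × ℝ ↦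
      max 0 (p.2 - q (expVec p.1))) (volume.prod ν) :=
    aestronglyMeasurable_const.sup (continuous_snd.aestronglyMeasurable.sub hq_fst)
  exact (hcexp.aestronglyMeasurable.mul (continuous_ofReal.comp_aestronglyMeasurable hmax)).mul
    hexp.aestronglyMeasurable

theorem integrable_prod_logPullback_max_sub (hq : IsMeasurableCostFun n q)
    (hz : ∀ i, 0 < (z i).re) :
    Integrable (fun p : EuclideanSpace ℝ (Fin n) × ℝ ↦
      logPullback z (fun x ↦ max 0 (p.2 - q x)) p.1 * (Real.exp (-p.2) : ℝ))
      (volume.prod (volume.restrict (Ioi 0))) := by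
  have hK := hq.integrable_logPullback_unitProfit hz
  refine (integrable_prod_iff' (hq.aestronglyMeasurable_prod_logPullback_max_sub z _)).2 ⟨?_, ?_⟩
  · filter_upwards [ae_restrict_mem measurableSet_Ioi] with t ht
    simp_rw [hq.logPullback_max_sub ht]
    exact ((hK.comp_add_right _).const_mul _).mul_const _
  · refine ((Real.GammaIntegral_convergent (re_two_add_sum_pos hz)).mul_const
      (∫ u, ‖logPullback z (unitProfit q) u‖)).congr ?_
    filter_upwards [ae_restrict_mem measurableSet_Ioi] with t ht
    simp_rw [hq.logPullback_max_sub ht, norm_mul]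
    rw [integral_mul_const, integral_const_mul,
      integral_add_right_eq_self fun u ↦ ‖logPullback z (unitProfit q) u‖,
      norm_cpow_eq_rpow_re_of_pos ht, Complex.norm_of_nonneg (Real.exp_nonneg _), sub_re, one_re]
    ring

theorem mellinT_exp_neg (hq : IsMeasurableCostFun n q) (hz : ∀ i, 0 < (z i).re) :
    mellinT n (fun x ↦ Real.exp (-q x)) z =
      Complex.Gamma (2 + ∑ i, z i) * mellinT n (unitProfit q) z := by
  have laplace (u : EuclideanSpace ℝ (Fin n)) : logPullback z (fun x ↦ Real.exp (-q x)) u =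
      ∫ t in Ioi 0, logPullback z (fun x ↦ max 0 (t - q x)) u * (Real.exp (-t) : ℝ) := by
    simp_rw [logPullback, mul_assoc, ← ofReal_mul]
    rw [integral_const_mul, integral_complex_ofReal,
      integral_max_sub_mul_exp_neg (hq.pos _ (expVec_mem_posOrth u)).le]
  simp_rw [mellinT_eq_integral_logPullback, laplace]
  rw [integral_integral_swap (hq.integrable_prod_logPullback_max_sub hz),
    Gamma_eq_integral (re_two_add_sum_pos hz), GammaIntegral, ← integral_mul_const]
  refine setIntegral_congr_fun measurableSet_Ioi fun t ht ↦ ?_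
  simp_rw [hq.logPullback_max_sub ht]
  rw [integral_mul_const, integral_const_mul, integral_add_right_eq_self]
  ring

theorem mellinT_exp_neg_eq_zero_iff (hq : IsMeasurableCostFun n q) (hz : ∀ i, 0 < (z i).re) :
    mellinT n (fun x ↦ Real.exp (-q x)) z = 0 ↔ mellinT n (unitProfit q) z = 0 := by
  rw [hq.mellinT_exp_neg hz, mul_eq_zero,
    or_iff_right (Gamma_ne_zero_of_re_pos (re_two_add_sum_pos hz))]

end IsMeasurableCostFun

end Gamma

section Monomials

variable {n : ℕ}

/-- The real part of the monomial `x^w`. When `(M e^{-q})(z) = 0`, the monomial with `w = z - I` is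
the element of `L^∞_{I-c}` that `Π_q` annihilates. -/
def reMonomial (w : Fin n → ℂ) (x : Fin n → ℝ) : ℝ := (∏ i, (x i : ℂ) ^ w i).re

theorem abs_reMonomial_le (w : Fin n → ℂ) {x : Fin n → ℝ} (hx : x ∈ posOrth n) :
    |reMonomial w x| ≤ ∏ i, x i ^ (w i).re := by
  refine (abs_re_le_norm _).trans_eq ?_
  rw [norm_prod]
  exact Finset.prod_congr rfl fun i _ ↦ norm_cpow_eq_rpow_re_of_pos (hx i) _

theorem memLinfw_reMonomial (w : Fin n → ℂ) : MemLinfw n (fun i ↦ -(w i).re) (reMonomial w) := by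
  have hmeas : Measurable (reMonomial w) := by
    unfold reMonomial
    fun_prop
  refine ⟨hmeas.aestronglyMeasurable, 1, ?_⟩
  filter_upwards [ae_restrict_mem measurableSet_posOrth] with x hx
  have hpos (i : Fin n) : 0 < x i ^ (-(w i).re) := Real.rpow_pos_of_pos (hx i) _
  rw [abs_mul, abs_of_pos (Finset.prod_pos fun i _ ↦ hpos i)]
  calc |reMonomial w x| * ∏ i, x i ^ (-(w i).re)
      ≤ (∏ i, x i ^ (w i).re) * ∏ i, x i ^ (-(w i).re) := by
        gcongr
        · exact Finset.prod_nonneg fun i _ ↦ (hpos i).le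
        · exact abs_reMonomial_le w hx
    _ = 1 := by
        rw [← Finset.prod_mul_distrib]
        exact Finset.prod_eq_one fun i _ ↦ by rw [← Real.rpow_add (hx i), add_neg_cancel,
          Real.rpow_zero]

theorem not_ae_reMonomial_eq_zero (w : Fin n → ℂ) :
    ¬ ∀ᵐ x ∂volume.restrict (posOrth n), reMonomial w x = 0 := by
  intro h
  have hexp : ∀ᵐ u : EuclideanSpace ℝ (Fin n), (cexp (∑ i, w i * u i)).re = 0 := by
    simpa only [reMonomial, prod_expVec_cpow] using ae_posOrth_iff.1 h
  have heq : (fun u : EuclideanSpace ℝ (Fin n) ↦ (cexp (∑ i, w i * u i)).re) = fun _ ↦ 0 :=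
    (Continuous.ae_eq_iff_eq volume (by fun_prop) continuous_const).1 hexp
  simpa using congrFun heq 0

theorem integral_mul_reMonomial {z : Fin n → ℂ} {g : (Fin n → ℝ) → ℝ}
    (hg : Integrable (logPullback z g)) :
    ∫ x in posOrth n, g x * reMonomial (fun i ↦ z i - 1) x = (mellinT n g z).re := by
  rw [mellinT, ← reCLM_apply,
    ← reCLM.integral_comp_comm ((integrableOn_mellin_integrand_iff g z).2 hg)]
  simp [reMonomial, mul_comm]

end Monomials

section ProfitOperator

variable {n : ℕ} {q f : (Fin n → ℝ) → ℝ} {c : Fin n → ℝ} {z : Fin n → ℂ}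

theorem memLp_top_logPullback (hf : MemLinfw n (fun i ↦ (z i).re) f) :
    MemLp (logPullback z f) ⊤ := by
  obtain ⟨hf_meas, B, hB⟩ := hf
  refine memLp_top_of_bound (aestronglyMeasurable_logPullback hf_meas z) B ?_
  filter_upwards [ae_posOrth_iff.1 hB] with u hu
  have hweight : ∏ i, expVec u i ^ (z i).re = Real.exp (∑ i, (z i).re * u i) := by
    rw [Real.exp_sum]
    exact Finset.prod_congr rfl fun i _ ↦ by rw [expVec, ← Real.exp_mul, mul_comm]
  rwa [hweight, abs_mul, Real.abs_exp, mul_comm, ← norm_logPullback] at hu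

namespace IsMeasurableCostFun

theorem piq_eq_mul_piq_one (hq : IsMeasurableCostFun n q) (f : (Fin n → ℝ) → ℝ) {p0 : ℝ}
    (hp0 : 0 < p0) {p : Fin n → ℝ} (hp : p ∈ posOrth n) :
    Piq n q f p0 p = p0 * Piq n q f 1 fun i ↦ p0⁻¹ * p i := by
  rw [Piq, Piq, ← integral_const_mul]
  refine setIntegral_congr_fun measurableSet_posOrth fun x hx ↦ ?_
  have hpx : (fun i ↦ p i * x i) ∈ posOrth n := fun i ↦ mul_pos (hp i) (hx i)
  simp only [hq.max_sub_eq_mul_unitProfit hp0 hpx, unitProfit, mul_assoc]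

theorem piq_reMonomial_eq_zero (hq : IsMeasurableCostFun n q) (hz : ∀ i, 0 < (z i).re)
    (hzero : mellinT n (unitProfit q) z = 0) {p0 : ℝ} (hp0 : 0 < p0) {p : Fin n → ℝ}
    (hp : p ∈ posOrth n) : Piq n q (reMonomial fun i ↦ z i - 1) p0 p = 0 := by
  obtain ⟨v, hv⟩ : (fun i ↦ p0⁻¹ * p i) ∈ range (expVec (n := n)) :=
    range_expVec ▸ fun i ↦ mul_pos (inv_pos.2 hp0) (hp i)
  have hone : Piq n q (reMonomial fun i ↦ z i - 1) 1 (expVec v) =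
      (mellinT n (fun x ↦ unitProfit q fun i ↦ expVec v i * x i) z).re :=
    integral_mul_reMonomial
      (integrable_logPullback_comp_expVec_mul (hq.integrable_logPullback_unitProfit hz) v)
  rw [hq.piq_eq_mul_piq_one _ hp0 hp, ← hv, hone, mellinT_comp_expVec_mul, hzero, mul_zero, zero_re,
    mul_zero]

theorem ae_eq_zero_of_piq_one_eq_zero (hq : IsMeasurableCostFun n q) (hc : ∀ i, 0 < c i)
    (hM : ∀ ξ : Fin n → ℝ, mellinT n (unitProfit q) (fun i ↦ (c i : ℂ) + I * (ξ i : ℂ)) ≠ 0)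
    (hf : MemLinfw n (fun i ↦ 1 - c i) f) (hPi : ∀ p ∈ posOrth n, Piq n q f 1 p = 0) :
    ∀ᵐ x ∂volume.restrict (posOrth n), f x = 0 := by
  let z : Fin n → ℂ := fun i ↦ c i
  have hz (i : Fin n) : 0 < (z i).re := hc i
  have hg : MemLp (logPullback (fun i ↦ 1 - z i) f) ⊤ := memLp_top_logPullback (by simpa [z])
  have correlation_zero (w : EuclideanSpace ℝ (Fin n)) :
      ∫ u, logPullback z (unitProfit q) (u - w) * logPullback (fun i ↦ 1 - z i) f u = 0 := by
    rw [integral_logPullback_sub_mul_logPullback_one_sub]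
    exact mul_eq_zero_of_right _ (ofReal_eq_zero.2 (hPi _ (expVec_mem_posOrth (-w))))
  have hg_zero := ae_eq_zero_of_integral_comp_sub_mul_eq_zero
    (hq.integrable_logPullback_unitProfit hz) (hq.contDiff_fourier_logPullback_unitProfit hz)
    (fun ξ ↦ fourier_logPullback z (unitProfit q) ξ ▸ hM _) hg correlation_zero
  refine ae_posOrth_iff.2 (hg_zero.mono fun u hu ↦ ?_)
  exact ofReal_eq_zero.1 ((mul_eq_zero.1 hu).resolve_left (exp_ne_zero _))

end IsMeasurableCostFun

end ProfitOperator

theorem piq_injective_Linf_iff_mellin_no_zeros_general {n : ℕ} {q : (Fin n → ℝ) → ℝ}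
    (hq : IsMeasurableCostFun n q) {c : Fin n → ℝ} (hc : ∀ i, 0 < c i) :
    (∀ f : (Fin n → ℝ) → ℝ, MemLinfw n (fun i ↦ 1 - c i) f →
        (∀ p0 : ℝ, 0 < p0 → ∀ p ∈ posOrth n, Piq n q f p0 p = 0) →
        ∀ᵐ x ∂(volume.restrict (posOrth n)), f x = 0) ↔
      ∀ ξ : Fin n → ℝ,
        mellinT n (fun x ↦ Real.exp (-q x)) (fun i ↦ (c i : ℂ) + I * (ξ i : ℂ)) ≠ 0 := by
  have re_pos (ξ : Fin n → ℝ) (i : Fin n) : 0 < ((c i : ℂ) + I * ξ i).re := by simpa using hc i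
  simp_rw [ne_eq, fun ξ ↦ hq.mellinT_exp_neg_eq_zero_iff (re_pos ξ)]
  refine ⟨fun hinj ξ hzero ↦ ?_, fun hM f hf hPi ↦ ?_⟩
  · refine not_ae_reMonomial_eq_zero _ (hinj (reMonomial fun i ↦ (c i : ℂ) + I * ξ i - 1) ?_ ?_)
    · simpa using memLinfw_reMonomial fun i ↦ (c i : ℂ) + I * ξ i - 1
    · exact fun p0 hp0 p hp ↦ hq.piq_reMonomial_eq_zero (re_pos ξ) hzero hp0 hp
  · exact hq.ae_eq_zero_of_piq_one_eq_zero hc hM hf (hPi 1 one_pos)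

/-- Theorem: for a cost function `q` and `c ∈ ℝ^n_+`, the profit operator `Π_q` is
injective on `L^∞_{I-c}(ℝ^n_+)` iff `(M e^{-q})(c + iξ) ≠ 0` for every `ξ ∈ ℝ^n`. -/
theorem piq_injective_Linf_iff_mellin_no_zeros
    (n : ℕ) (hn : 2 ≤ n) (q : (Fin n → ℝ) → ℝ) (hq : IsCostFun n q)
    (c : Fin n → ℝ) (hc : ∀ i, 0 < c i) :
    (∀ f : (Fin n → ℝ) → ℝ, MemLinfw n (fun i => 1 - c i) f →
        (∀ p0 : ℝ, 0 < p0 → ∀ p ∈ posOrth n, Piq n q f p0 p = 0) →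
        ∀ᵐ x ∂(volume.restrict (posOrth n)), f x = 0) ↔
      ∀ ξ : Fin n → ℝ,
        mellinT n (fun x => Real.exp (-q x)) (fun i => (c i : ℂ) + I * (ξ i : ℂ)) ≠ 0 :=
  piq_injective_Linf_iff_mellin_no_zeros_general hq.isMeasurableCostFun hc
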